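/- Let f be analytic on the unit disc D with f(0)=0, f'(0)=1. If |arg(1/2 − z f''(z)/f'(z))| < arctan(2/√3) for all z in D, then f is starlike. -/

import Mathlib

open Complex Metric Real
open Bornology Filter Topology
open scoped ComplexConjugate ComplexOrder

/-!
The function `g = f / (z f')` satisfies `g 0 = 1` and `z g' = 1 - g Q`, where `Q = 1 + z f'' / f'`.
If `Re g` vanished somewhere in the disc, then at such a point `z₀` of least modulus, where
`g = i t`, Jack's lemma applied to the Cayley transform `(1 - g) / (1 + g)` would make `z₀ g'` real
and at most `-(1 + t²) / 2`. Then `i t Q = 1 - z₀ g'` is real and at least `(3 + t²) / 2 ≥ √3 |t|`,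
so `Q` is purely imaginary with `|Q| ≥ √3`. The condition on `arg (1/2 - z f'' / f')` says that
`3/2 - Q` lies in a sector meeting the line `Re = 3/2` only where `|Im| < √3`, so it forbids this.
Zeros of `f'` are excluded because `Q` has poles there, and near a pole it takes every large value.
-/

section BoundaryMaximum

lemma nonneg_mul_of_forall_re_mul_le {c z₀ : ℂ}
    (h : ∀ z ∈ closedBall (0 : ℂ) ‖z₀‖, (c * z).re ≤ (c * z₀).re) : 0 ≤ c * z₀ := by
  rcases eq_or_ne c 0 with rfl | hc
  · simp
  have hc' : (‖c‖ : ℂ) ≠ 0 := by simpa using hc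
  have haligned : c * (‖z₀‖ / ‖c‖ * conj c) = (‖c * z₀‖ : ℝ) := by
    rw [mul_left_comm, mul_conj', norm_mul]
    push_cast
    field_simp
  have hle := h (‖z₀‖ / ‖c‖ * conj c) (by simp [norm_ne_zero_iff.mpr hc])
  rw [haligned, ofReal_re] at hle
  exact re_eq_norm.mp ((re_le_norm _).antisymm hle)

lemma nonneg_mul_logDeriv_of_isMaxOn_norm {p : ℂ → ℂ} {z₀ : ℂ} (hp : DifferentiableAt ℂ p z₀)
    (hmax : IsMaxOn (fun z => ‖p z‖) (closedBall 0 ‖z₀‖) z₀) : 0 ≤ z₀ * logDeriv p z₀ := by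
  have hmax_sq : IsMaxOn (fun z => ‖p z‖ ^ 2) (closedBall 0 ‖z₀‖) z₀ := fun z hz =>
    pow_le_pow_left₀ (norm_nonneg _) (hmax hz) 2
  have hderiv := (hp.hasDerivAt.hasFDerivAt.restrictScalars ℝ).norm_sq
  have hnonneg : 0 ≤ conj (p z₀) * deriv p z₀ * z₀ := by
    refine nonneg_mul_of_forall_re_mul_le fun z hz => ?_
    have hcone : z - z₀ ∈ posTangentConeAt (closedBall 0 ‖z₀‖) z₀ :=
      sub_mem_posTangentConeAt_of_segment_subset
        ((convex_closedBall _ _).segment_subset (by simp) hz)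
    have hle : 2 * (conj (p z₀) * deriv p z₀ * (z - z₀)).re ≤ 0 := by
      convert hmax_sq.localize.hasFDerivWithinAt_nonpos hderiv.hasFDerivWithinAt hcone using 1
      simp [Complex.inner]
      ring
    rw [mul_sub, sub_re] at hle
    linarith
  have heq : z₀ * logDeriv p z₀ =
      conj (p z₀) * deriv p z₀ * z₀ * ((‖p z₀‖ ^ 2)⁻¹ : ℝ) := by
    rcases eq_or_ne (p z₀) 0 with hp0 | hp0
    · simp [logDeriv_apply, hp0]
    · rw [ofReal_inv, ofReal_pow, ← conj_mul', logDeriv_apply]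
      have := (map_ne_zero (starRingEnd ℂ)).mpr hp0
      field_simp
  rw [heq]
  exact mul_nonneg hnonneg (zero_le_real.mpr (by positivity))

lemma eq_mul_dslope_zero {f : ℂ → ℂ} (hf0 : f 0 = 0) : f = fun z => z * dslope f 0 z := by
  ext z
  simpa [hf0] using (sub_smul_dslope f 0 z).symm

/-- By the Schwarz lemma, maximality of `|w|` at `z₀` makes `|w z / z|` maximal there as well; the
summand `1` is the contribution of the factor `z` in `w = z * (w / z)`. -/
theorem jack_lemma {w : ℂ → ℂ} {z₀ : ℂ} (hw : DifferentiableOn ℂ w (ball 0 ‖z₀‖))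
    (hw_at : DifferentiableAt ℂ w z₀) (hw0 : w 0 = 0) (hwz₀ : w z₀ ≠ 0)
    (hmax : IsMaxOn (fun z => ‖w z‖) (closedBall 0 ‖z₀‖) z₀) : 1 ≤ z₀ * logDeriv w z₀ := by
  have hz₀ : z₀ ≠ 0 := by
    rintro rfl
    exact hwz₀ hw0
  have hdslope_norm : ∀ z ≠ 0, ‖dslope w 0 z‖ = ‖w z‖ / ‖z‖ := fun z hz => by
    simp [dslope_of_ne _ hz, slope_def_field, hw0]
  have hdslope_at : DifferentiableAt ℂ (dslope w 0) z₀ :=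
    (differentiableAt_dslope_of_ne hz₀).mpr hw_at
  have hdslope_max : IsMaxOn (fun z => ‖dslope w 0 z‖) (closedBall 0 ‖z₀‖) z₀ := by
    intro z hz
    change ‖dslope w 0 z‖ ≤ ‖dslope w 0 z₀‖
    rw [hdslope_norm z₀ hz₀]
    rcases (mem_closedBall_zero_iff.mp hz).lt_or_eq with hlt | heq
    · refine norm_dslope_le_div_of_mapsTo_ball hw (fun y hy => ?_) (mem_ball_zero_iff.mpr hlt)
      simpa [hw0] using hmax (ball_subset_closedBall hy)
    · rw [hdslope_norm z (norm_ne_zero_iff.mp (heq ▸ norm_ne_zero_iff.mpr hz₀)), heq]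
      gcongr
      exact hmax hz
  have hlog : z₀ * logDeriv w z₀ = 1 + z₀ * logDeriv (dslope w 0) z₀ := by
    have hne : dslope w 0 z₀ ≠ 0 :=
      right_ne_zero_of_mul (congrFun (eq_mul_dslope_zero hw0) z₀ ▸ hwz₀)
    conv_lhs => rw [eq_mul_dslope_zero hw0]
    rw [logDeriv_mul (f := fun z => z) z₀ hz₀ hne differentiableAt_id hdslope_at, mul_add,
      logDeriv_id', mul_one_div_cancel hz₀]
  rw [hlog]
  exact le_add_of_nonneg_right (nonneg_mul_logDeriv_of_isMaxOn_norm hdslope_at hdslope_max)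

end BoundaryMaximum

section FirstZero

lemma exists_eq_zero_forall_closedBall_nonneg {E : Type*} [NormedAddCommGroup E] [NormedSpace ℝ E]
    [ProperSpace E] {u : E → ℝ} {R : ℝ} (hu : ContinuousOn u (ball 0 R)) (hu0 : 0 < u 0) {x₁ : E}
    (hx₁ : x₁ ∈ ball 0 R) (hux₁ : u x₁ ≤ 0) :
    ∃ x₀ ∈ ball 0 R, u x₀ = 0 ∧ ∀ x ∈ closedBall 0 ‖x₀‖, 0 ≤ u x := by
  have hsubset {x : E} (hx : x ∈ ball 0 R) : closedBall (0 : E) ‖x‖ ⊆ ball 0 R :=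
    closedBall_subset_ball (mem_ball_zero_iff.mp hx)
  have hcompact : IsCompact (closedBall (0 : E) ‖x₁‖ ∩ u ⁻¹' Set.Iic 0) :=
    (isCompact_closedBall _ _).of_isClosed_subset
      ((hu.mono (hsubset hx₁)).preimage_isClosed_of_isClosed isClosed_closedBall isClosed_Iic)
      Set.inter_subset_left
  obtain ⟨x₀, ⟨hx₀, hux₀⟩, hmin⟩ :=
    hcompact.exists_isMinOn ⟨x₁, by simp, hux₁⟩ continuous_norm.continuousOn
  have hx₀R : x₀ ∈ ball 0 R := hsubset hx₁ hx₀
  have hx₀_ne : x₀ ≠ 0 := by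
    rintro rfl
    exact hux₀.not_gt hu0
  have hpos : ∀ x ∈ ball 0 ‖x₀‖, 0 ≤ u x := by
    intro x hx
    by_contra! hneg
    rw [mem_ball_zero_iff] at hx
    rw [mem_closedBall_zero_iff] at hx₀
    exact hx.not_ge (hmin ⟨mem_closedBall_zero_iff.mpr (hx.le.trans hx₀), hneg.le⟩)
  have hnonneg : ∀ x ∈ closedBall 0 ‖x₀‖, 0 ≤ u x := by
    rw [← closure_ball _ (norm_ne_zero_iff.mpr hx₀_ne)]
    refine fun x hx => le_on_closure hpos continuousOn_const ?_ hx
    exact hu.mono (closure_ball_subset_closedBall.trans (hsubset hx₀R))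
  exact ⟨x₀, hx₀R, le_antisymm hux₀ (hnonneg x₀ (by simp)), hnonneg⟩

end FirstZero

section CayleyTransform

lemma norm_conj_add_sq_sub_norm_sub_sq (a z : ℂ) :
    ‖conj a + z‖ ^ 2 - ‖a - z‖ ^ 2 = 4 * a.re * z.re := by
  simp only [← normSq_eq_norm_sq, normSq_apply, add_re, add_im, sub_re, sub_im, conj_re, conj_im]
  ring

lemma conj_add_ne_zero {a z : ℂ} (ha : 0 < a.re) (hz : 0 ≤ z.re) : conj a + z ≠ 0 := by
  intro h
  have : a.re + z.re = 0 := by simpa using congrArg re h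
  linarith

lemma norm_sub_div_conj_add_le_one {a z : ℂ} (ha : 0 < a.re) (hz : 0 ≤ z.re) :
    ‖(a - z) / (conj a + z)‖ ≤ 1 := by
  rw [norm_div, div_le_one (norm_pos_iff.mpr (conj_add_ne_zero ha hz))]
  refine le_of_sq_le_sq ?_ (norm_nonneg _)
  linarith [norm_conj_add_sq_sub_norm_sub_sq a z, mul_nonneg ha.le hz]

lemma norm_sub_div_conj_add_eq_one {a z : ℂ} (ha : 0 < a.re) (hz : z.re = 0) :
    ‖(a - z) / (conj a + z)‖ = 1 := by
  rw [norm_div, div_eq_one_iff_eq (norm_ne_zero_iff.mpr (conj_add_ne_zero ha hz.ge)),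
    ← sq_eq_sq₀ (norm_nonneg _) (norm_nonneg _)]
  linarith [norm_conj_add_sq_sub_norm_sub_sq a z, congrArg (4 * a.re * ·) hz]

lemma logDeriv_sub_div_conj_add {a : ℂ} {g : ℂ → ℂ} {z : ℂ} (hg : DifferentiableAt ℂ g z)
    (ha : 0 < a.re) (hre : (g z).re = 0) :
    logDeriv (fun y => (a - g y) / (conj a + g y)) z =
      -(2 * a.re / ‖g z - a‖ ^ 2 : ℝ) * deriv g z := by
  have hden : conj a + g z ≠ 0 := conj_add_ne_zero ha hre.ge
  have hnum : a - g z ≠ 0 := by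
    intro h
    have : a.re - (g z).re = 0 := by simpa using congrArg re h
    linarith
  have hconj : conj (a - g z) = conj a + g z := by
    apply Complex.ext <;> simp [hre]
  rw [logDeriv_div z hnum hden (hg.const_sub a) (hg.const_add _)]
  simp only [logDeriv_apply, deriv_const_sub, deriv_const_add, norm_sub_rev (g z) a]
  push_cast
  rw [← mul_conj', hconj, re_eq_add_conj]
  field_simp
  ring

lemma mul_deriv_le_of_re_eq_zero {g : ℂ → ℂ} {z₀ : ℂ}
    (hg : ∀ z ∈ closedBall 0 ‖z₀‖, DifferentiableAt ℂ g z) (hg0 : 0 < (g 0).re)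
    (hre : (g z₀).re = 0) (hnonneg : ∀ z ∈ closedBall 0 ‖z₀‖, 0 ≤ (g z).re) :
    z₀ * deriv g z₀ ≤ (-(‖g z₀ - g 0‖ ^ 2 / (2 * (g 0).re)) : ℝ) := by
  set w : ℂ → ℂ := fun z => (g 0 - g z) / (conj (g 0) + g z)
  have hz₀ : z₀ ∈ closedBall 0 ‖z₀‖ := by simp
  have hw_diff : ∀ z ∈ closedBall 0 ‖z₀‖, DifferentiableAt ℂ w z := fun z hz =>
    ((hg z hz).const_sub _).div ((hg z hz).const_add _) (conj_add_ne_zero hg0 (hnonneg z hz))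
  have hw_norm : ‖w z₀‖ = 1 := norm_sub_div_conj_add_eq_one hg0 hre
  have hjack : 1 ≤ z₀ * logDeriv w z₀ := by
    refine jack_lemma
      (fun z hz => (hw_diff z (ball_subset_closedBall hz)).differentiableWithinAt)
      (hw_diff z₀ hz₀) (by simp [w]) (norm_ne_zero_iff.mp (by simp [hw_norm])) fun z hz => ?_
    exact (norm_sub_div_conj_add_le_one hg0 (hnonneg z hz)).trans hw_norm.ge
  have hpos : 0 < ‖g z₀ - g 0‖ := by
    refine norm_pos_iff.mpr (sub_ne_zero.mpr fun h => ?_)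
    rw [← h, hre] at hg0
    exact hg0.false
  rw [logDeriv_sub_div_conj_add (hg z₀ hz₀) hg0 hre, mul_left_comm, ← ofReal_neg, Complex.le_def,
    re_ofReal_mul, im_ofReal_mul, one_re, one_im] at hjack
  rw [Complex.le_def, ofReal_re, ofReal_im]
  have hcoef : 0 < 2 * (g 0).re / ‖g z₀ - g 0‖ ^ 2 := by positivity
  refine ⟨?_, (mul_eq_zero.mp hjack.2.symm).resolve_left (neg_ne_zero.mpr hcoef.ne')⟩
  rw [le_neg, ← inv_div, inv_le_iff_one_le_mul₀ hcoef]
  linarith [hjack.1]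

end CayleyTransform

section OpenDoor

/-- The plane slit along the two half-lines `{i t : |t| ≥ b}`, the target of Miller and Mocanu's
open door lemma. -/
def openDoor (b : ℝ) : Set ℂ := {q | q.re = 0 → |q.im| < b}

lemma sub_mem_openDoor_of_abs_arg_lt {b c : ℝ} {q : ℂ} (hc : 0 < c)
    (harg : |arg q| < Real.arctan (b / c)) : c - q ∈ openDoor b := by
  intro hre
  have hqre : q.re = c := by
    rw [sub_re, ofReal_re] at hre
    linarith
  obtain ⟨hlower, hupper⟩ := abs_lt.mp (harg.trans (arctan_lt_pi_div_two _))
  have harctan : arg q = Real.arctan (q.im / c) := by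
    rw [← hqre, ← tan_arg, Real.arctan_tan hlower hupper]
  rw [harctan, abs_lt, ← Real.arctan_neg, arctan_lt_arctan_iff, arctan_lt_arctan_iff, ← abs_lt,
    abs_div, abs_of_pos hc, div_lt_div_iff_of_pos_right hc] at harg
  simpa using harg

theorem re_pos_of_mul_deriv_eq_one_sub_mul {g Q : ℂ → ℂ} {R : ℝ}
    (hg : DifferentiableOn ℂ g (ball 0 R)) (hg0 : g 0 = 1)
    (hode : ∀ z ∈ ball 0 R, z * deriv g z = 1 - g z * Q z)
    (hQ : ∀ z ∈ ball 0 R, Q z ∈ openDoor √3) {z : ℂ} (hz : z ∈ ball 0 R) : 0 < (g z).re := by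
  by_contra! hneg
  obtain ⟨z₀, hz₀, hre : (g z₀).re = 0, hnonneg⟩ := exists_eq_zero_forall_closedBall_nonneg
    (continuous_re.comp_continuousOn hg.continuousOn) (by simp [hg0]) hz hneg
  have hle := mul_deriv_le_of_re_eq_zero
    (fun y hy => hg.differentiableAt <|
      isOpen_ball.mem_nhds (closedBall_subset_ball (mem_ball_zero_iff.mp hz₀) hy))
    (by simp [hg0]) hre hnonneg
  set t := (g z₀).im with ht
  have hnorm : ‖g z₀ - g 0‖ ^ 2 = 1 + t ^ 2 := by
    rw [← normSq_eq_norm_sq, normSq_apply, hg0, sub_re, sub_im, hre, one_re, one_im]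
    ring
  rw [hnorm, hode z₀ hz₀, Complex.le_def, sub_re, sub_im, mul_re, mul_im, hre, ← ht] at hle
  simp only [hg0, one_re, one_im, ofReal_re, ofReal_im] at hle
  obtain ⟨hre_le, him⟩ := hle
  have ht0 : t ≠ 0 := by
    intro h
    norm_num [h] at hre_le
  have hQre : (Q z₀).re = 0 := (mul_eq_zero.mp (by linarith)).resolve_left ht0
  have ham_gm : √3 * |t| ≤ (3 + t ^ 2) / 2 := by
    nlinarith [sq_nonneg (√3 - |t|), sq_abs t, Real.sq_sqrt (show (0 : ℝ) ≤ 3 by simp)]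
  have hQim : (3 + t ^ 2) / 2 ≤ |(Q z₀).im| * |t| := by
    rw [← abs_mul]
    exact le_trans (by linarith) (neg_le_abs _)
  exact (hQ z₀ hz₀ hQre).not_ge (le_of_mul_le_mul_right (ham_gm.trans hQim) (abs_pos.mpr ht0))

end OpenDoor

section Poles

lemma nhdsNE_le_map_nhdsNE_of_analyticAt {ψ : ℂ → ℂ} {z₀ : ℂ} (hψ : AnalyticAt ℂ ψ z₀)
    (hconst : ¬∀ᶠ z in 𝓝 z₀, ψ z = ψ z₀) : 𝓝[≠] (ψ z₀) ≤ map ψ (𝓝[≠] z₀) := by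
  have hopen : 𝓝 (ψ z₀) ≤ map ψ (𝓝[≠] z₀) ⊔ pure (ψ z₀) := by
    rw [← map_pure, ← map_sup, nhdsNE_sup_pure]
    exact hψ.eventually_constant_or_nhds_le_map_nhds.resolve_left hconst
  intro s hs
  rw [mem_nhdsWithin_iff_exists_mem_nhds_inter]
  exact ⟨s ∪ {ψ z₀}, hopen ⟨mem_of_superset hs Set.subset_union_left, by simp⟩,
    fun q hq => hq.1.resolve_right hq.2⟩

lemma cobounded_le_map_nhdsNE_of_meromorphicOrderAt_neg {φ : ℂ → ℂ} {z₀ : ℂ}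
    (hφ : meromorphicOrderAt φ z₀ < 0) : cobounded ℂ ≤ map φ (𝓝[≠] z₀) := by
  have hinv : MeromorphicAt φ⁻¹ z₀ := (meromorphicAt_of_meromorphicOrderAt_ne_zero hφ.ne).inv
  have horder : 0 < meromorphicOrderAt φ⁻¹ z₀ := by
    rw [meromorphicOrderAt_inv]
    exact LinearOrderedAddCommGroupWithTop.neg_pos.mpr (.inl hφ)
  set ψ := toMeromorphicNFAt φ⁻¹ z₀
  have hψ_eq : φ⁻¹ =ᶠ[𝓝[≠] z₀] ψ := hinv.eq_nhdsNE_toMeromorphicNFAt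
  have hψ_zero : ψ z₀ = 0 := toMeromorphicNFAt_of_meromorphicOrderAt_ne_zero horder.ne'
  have hψ : AnalyticAt ℂ ψ z₀ :=
    hinv.meromorphicOrderAt_nonneg_iff_analyticAt_toMeromorphicNFAt.mp horder.le
  have hψ_not_const : ¬∀ᶠ z in 𝓝 z₀, ψ z = ψ z₀ := by
    intro hconst
    rw [hψ_zero] at hconst
    have htop : meromorphicOrderAt φ⁻¹ z₀ = ⊤ := meromorphicOrderAt_eq_top_iff.mpr <| by
      filter_upwards [hψ_eq, hconst.filter_mono nhdsWithin_le_nhds] with z hz hz0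
      rw [hz, hz0]
    rw [meromorphicOrderAt_inv, LinearOrderedAddCommGroupWithTop.neg_eq_top] at htop
    exact not_top_lt (htop ▸ hφ)
  have hopen : 𝓝[≠] 0 ≤ map ψ (𝓝[≠] z₀) :=
    hψ_zero ▸ nhdsNE_le_map_nhdsNE_of_analyticAt hψ hψ_not_const
  calc cobounded ℂ = map Inv.inv (𝓝[≠] 0) := inv_nhdsNE_zero.symm
    _ ≤ map Inv.inv (map ψ (𝓝[≠] z₀)) := map_mono hopen
    _ = map φ (𝓝[≠] z₀) := by
      rw [← map_congr hψ_eq, map_map]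
      congr 1
      ext z
      simp

lemma meromorphicOrderAt_one_add_mul_logDeriv_neg {h : ℂ → ℂ} {z₀ : ℂ} (hh : AnalyticAt ℂ h z₀)
    (hz₀ : z₀ ≠ 0) (hzero : h z₀ = 0) (hne : ¬∀ᶠ z in 𝓝 z₀, h z = 0) :
    meromorphicOrderAt (fun z => 1 + z * logDeriv h z) z₀ < 0 := by
  have hmero := hh.meromorphicAt
  have hlog : meromorphicOrderAt (logDeriv h) z₀ = -1 := by
    refine meromorphicOrderAt_logDeriv_eq_neg_one hmero ?_ ?_
    · rw [hh.meromorphicOrderAt_eq]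
      simp [hh.analyticOrderAt_eq_zero, hzero]
    · rw [hh.meromorphicOrderAt_eq]
      simpa [analyticOrderAt_eq_top] using hne
  have hid : meromorphicOrderAt (fun z : ℂ => z) z₀ = 0 := by
    have hanalytic : AnalyticAt ℂ (fun z : ℂ => z) z₀ := analyticAt_id
    rw [hanalytic.meromorphicOrderAt_eq, hanalytic.analyticOrderAt_eq_zero.mpr hz₀]
    rfl
  have hmul : meromorphicOrderAt ((fun z : ℂ => z) * logDeriv h) z₀ = -1 := by
    rw [meromorphicOrderAt_mul (by fun_prop) hmero.logDeriv, hid, hlog, zero_add]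
  have hone : meromorphicOrderAt (fun _ : ℂ => (1 : ℂ)) z₀ = 0 := by
    simp [meromorphicOrderAt_const]
  have hneg : meromorphicOrderAt ((fun z : ℂ => z) * logDeriv h) z₀ < 0 := by
    rw [hmul]
    decide
  have hadd := meromorphicOrderAt_add_eq_right_of_lt (.const 1 z₀) (hneg.trans_eq hone.symm)
  exact hadd.trans_lt hneg

lemma frequently_notMem_openDoor (b : ℝ) : ∃ᶠ q in cobounded ℂ, q ∉ openDoor b := by
  have htendsto : Tendsto (fun t : ℝ => (t * I : ℂ)) atTop (cobounded ℂ) := by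
    rw [← tendsto_norm_atTop_iff_cobounded]
    simpa using tendsto_abs_atTop_atTop
  refine htendsto.frequently (Eventually.frequently ?_)
  filter_upwards [eventually_ge_atTop b] with t ht hmem
  have ht' : |t| < b := by simpa using hmem (by simp)
  exact (ht.trans (le_abs_self t)).not_gt ht'

theorem ne_zero_of_one_add_mul_logDeriv_mem_openDoor {h : ℂ → ℂ} {b R : ℝ}
    (hh : DifferentiableOn ℂ h (ball 0 R)) (h0 : h 0 ≠ 0)
    (hdoor : ∀ z ∈ ball 0 R, 1 + z * logDeriv h z ∈ openDoor b) {z : ℂ} (hz : z ∈ ball 0 R) :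
    h z ≠ 0 := by
  intro hzero
  have hz_ne : z ≠ 0 := by
    rintro rfl
    exact h0 hzero
  have hanalytic : AnalyticOnNhd ℂ h (ball 0 R) := hh.analyticOnNhd isOpen_ball
  have hnot_locally_zero : ¬∀ᶠ y in 𝓝 z, h y = 0 := fun hloc =>
    h0 <| hanalytic.eqOn_zero_of_preconnected_of_eventuallyEq_zero
      (convex_ball 0 R).isPreconnected hz hloc (mem_ball_self (pos_of_mem_ball hz))
  have hpole := meromorphicOrderAt_one_add_mul_logDeriv_neg (hanalytic z hz) hz_ne hzero
    hnot_locally_zero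
  refine (frequently_notMem_openDoor b).filter_mono
    (cobounded_le_map_nhdsNE_of_meromorphicOrderAt_neg hpole) ?_
  rw [eventually_map]
  filter_upwards [nhdsWithin_le_nhds (isOpen_ball.mem_nhds hz)] with y hy
  exact not_not_intro (hdoor y hy)

end Poles

section Starlike

lemma mul_deriv_dslope_div_deriv {f : ℂ → ℂ} {z : ℂ} (hf : AnalyticAt ℂ f z)
    (hd : DifferentiableAt ℂ (dslope f 0) z) (hf0 : f 0 = 0) (hf' : deriv f z ≠ 0) :
    z * deriv (fun y => dslope f 0 y / deriv f y) z =
      1 - dslope f 0 z / deriv f z * (1 + z * deriv (deriv f) z / deriv f z) := by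
  have hderiv : deriv f z = dslope f 0 z + z * deriv (dslope f 0) z := by
    conv_lhs => rw [eq_mul_dslope_zero hf0]
    rw [deriv_fun_mul differentiableAt_fun_id hd]
    simp
  rw [deriv_fun_div hd hf.deriv.differentiableAt hf']
  field_simp
  linear_combination (-deriv f z) * hderiv

theorem stmt_3_general {f : ℂ → ℂ} {R : ℝ} (hf : DifferentiableOn ℂ f (ball 0 R))
    (hf0 : f 0 = 0) (hf1 : deriv f 0 ≠ 0)
    (hdoor : ∀ z ∈ ball (0 : ℂ) R, 1 + z * deriv (deriv f) z / deriv f z ∈ openDoor √3) :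
    ∀ z ∈ ball (0 : ℂ) R, z ≠ 0 → 0 < (z * deriv f z / f z).re := by
  intro z hz hz_ne
  have hf' : DifferentiableOn ℂ (deriv f) (ball 0 R) := hf.deriv isOpen_ball
  have hf'_ne : ∀ y ∈ ball 0 R, deriv f y ≠ 0 := fun y hy =>
    ne_zero_of_one_add_mul_logDeriv_mem_openDoor hf' hf1
      (by simpa only [logDeriv_apply, mul_div_assoc] using hdoor) hy
  have hdslope : DifferentiableOn ℂ (dslope f 0) (ball 0 R) :=
    (differentiableOn_dslope (ball_mem_nhds 0 (pos_of_mem_ball hz))).mpr hf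
  have hpos : 0 < (dslope f 0 z / deriv f z).re :=
    re_pos_of_mul_deriv_eq_one_sub_mul (hdslope.div hf' hf'_ne) (by simp [hf1])
      (fun y hy => mul_deriv_dslope_div_deriv (hf.analyticAt (isOpen_ball.mem_nhds hy))
        (hdslope.differentiableAt (isOpen_ball.mem_nhds hy)) hf0 (hf'_ne y hy)) hdoor hz
  have hinv : z * deriv f z / f z = (dslope f 0 z / deriv f z)⁻¹ := by
    rw [dslope_of_ne _ hz_ne, slope_def_field, hf0, sub_zero, sub_zero, inv_div, div_div_eq_mul_div,
      mul_comm]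
  rw [hinv, inv_re]
  exact div_pos hpos (normSq_pos.mpr fun h => by simp [h] at hpos)

end Starlike

theorem stmt_3 (f : ℂ → ℂ)
    (hf : DifferentiableOn ℂ f (ball 0 1)) (hf0 : f 0 = 0) (hf1 : deriv f 0 = 1)
    (harg : ∀ z ∈ ball (0 : ℂ) 1,
      |Complex.arg ((1 : ℂ) / 2 - z * deriv (deriv f) z / deriv f z)| <
        Real.arctan (2 / Real.sqrt 3)) :
    ∀ z ∈ ball (0 : ℂ) 1, z ≠ 0 → 0 < (z * deriv f z / f z).re := by
  refine stmt_3_general hf hf0 (hf1 ▸ one_ne_zero) fun z hz => ?_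
  have hconst : 2 / √3 = √3 / (3 / 2) := by
    field_simp
    simp
  convert sub_mem_openDoor_of_abs_arg_lt (c := 3 / 2) (by simp) (hconst ▸ harg z hz) using 1
  push_cast
  ring
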